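/- Downward-crossing segment bound: suppose 0 ≤ τ_l < τ_r ≤ T, Δ(τ_l) = 0, Δ(τ_r) = −β, and −β < Δ(t) < 0 for all t with τ_l < t < τ_r. Then Σ_{t=τ_l+1}^{τ_r−1} ( g_t(1) − g_t(0) ) ≤ β. -/

import Mathlib

/-- The cumulative cost difference `Δ(t)`, with `Δ(0) = −β` and
`Δ(t) = min{0, max{−β, Δ(t−1) + (g_t(0) − g_t(1))}}`. -/
noncomputable def Δfun (β : ℝ) (g0 g1 : ℕ → ℝ) : ℕ → ℝ
  | 0 => -β
  | t + 1 => min 0 (max (-β) (Δfun β g0 g1 t + (g0 (t + 1) - g1 (t + 1))))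

/-- downward-crossing segment bound: if `Δ(τ_l) = 0`,
`Δ(τ_r) = −β` and `−β < Δ(t) < 0` strictly inside the segment, then
`Σ_{t=τ_l+1}^{τ_r−1} (g_t(1) − g_t(0)) ≤ β`. -/
theorem stmt15 (T : ℕ) (β : ℝ) (hβ : 0 ≤ β) (g0 g1 : ℕ → ℝ)
    (hg0 : ∀ t, 1 ≤ t → t ≤ T → 0 ≤ g0 t) (hg1 : ∀ t, 1 ≤ t → t ≤ T → 0 ≤ g1 t)
    (τl τr : ℕ) (hlr : τl < τr) (hrT : τr ≤ T)
    (hl : Δfun β g0 g1 τl = 0) (hr : Δfun β g0 g1 τr = -β)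
    (hmid : ∀ t, τl < t → t < τr → -β < Δfun β g0 g1 t ∧ Δfun β g0 g1 t < 0) :
    ∑ t ∈ Finset.Ioo τl τr, (g1 t - g0 t) ≤ β := by
  have key : ∀ k, τl + k < τr →
      ∑ t ∈ Finset.Ioc τl (τl + k), (g1 t - g0 t) = -Δfun β g0 g1 (τl + k) := by
    intro k
    induction k with
    | zero => intro _; simp [hl]
    | succ k ih =>
      intro hk
      have h1 := ih (by omega)
      obtain ⟨ha, hb⟩ := hmid (τl + (k + 1)) (by omega) hk
      rw [← add_assoc] at *
      rw [Finset.sum_Ioc_succ_top (by omega), h1]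
      have hd : Δfun β g0 g1 (τl + k + 1) = min 0 (max (-β)
        (Δfun β g0 g1 (τl + k) + (g0 (τl + k + 1) - g1 (τl + k + 1)))) := rfl
      rw [hd] at ha hb ⊢
      grind
  obtain ⟨k, rfl⟩ := Nat.exists_eq_add_of_lt hlr
  have hI : Finset.Ioo τl (τl + k + 1) = Finset.Ioc τl (τl + k) := by
    ext x; simp only [Finset.mem_Ioo, Finset.mem_Ioc]; omega
  rw [hI, key k (by omega)]
  rcases Nat.eq_zero_or_pos k with h | h
  · subst h; simp [hl, hβ]
  · have := (hmid (τl + k) (by omega) (by omega)).1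
    linarith
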